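/- Let β > 0 and let ρ be the Fair loss with parameter β, ρ(t) = β²(|t|/β − log(1 + |t|/β)). Fix b ≥ 0 and σ ∈ ℝ, and define ψ(s) = ρ((s − b)/√(s + σ²)) for s > −σ². Then there exists S such that for all s > S, ψ is twice differentiable at s and ψ″(s) < 0; in particular ψ is not convex on any interval of the form (S, ∞). -/

import Mathlib

/-!
Where `g > 0`, `g' ≠ 0` and `ρ' ∘ g > 0`, the second derivative
`(ρ ∘ g)'' = ρ''(g) g'² + ρ'(g) g''` has the sign of `t ρ''(t) / ρ'(t) + g g'' / g'²`, `t = g(s)`.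
For the residual `g(s) = (s - b) / √(s + v)`, which grows like `√s`, the second term tends to `-1`.
For the Fair loss, which grows linearly, the first is `β / (β + t)` and tends to `0`.
Any loss for which it has a limit below `1` behaves in the same way.
-/

open Filter Topology Set

/-- The Fair loss function with parameter `β`. -/
noncomputable def fairLoss (β t : ℝ) : ℝ :=
  β ^ 2 * (|t| / β - Real.log (1 + |t| / β))

/-- The argument of the loss function in a robust scalar fidelity with data value `b`. The real
parameter `v` takes the place of `σ ^ 2`. -/
noncomputable def standardizedResidual (b v s : ℝ) : ℝ :=
  (s - b) / √(s + v)

/-- The robust scalar fidelity of the loss function `ρ` with data value `b`. The real parameter `v`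
takes the place of `σ ^ 2`. -/
noncomputable def robustFidelity (ρ : ℝ → ℝ) (b v : ℝ) : ℝ → ℝ :=
  ρ ∘ standardizedResidual b v

section SecondDerivative

theorem not_convexOn_of_strictConcaveOn {E : Type*} [AddCommMonoid E] [Module ℝ E] {s : Set E}
    {f : E → ℝ} (hs : s.Nontrivial) (hf : StrictConcaveOn ℝ s f) : ¬ ConvexOn ℝ s f := by
  intro hconv
  obtain ⟨x, hx, y, hy, hxy⟩ := hs
  have hhalf : (0 : ℝ) < 1 / 2 := by norm_num
  have hsum : (1 / 2 : ℝ) + 1 / 2 = 1 := by norm_num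
  exact (hf.2 hx hy hxy hhalf hhalf hsum).not_ge (hconv.2 hx hy hhalf.le hhalf.le hsum)

theorem not_convexOn_Ioi_of_deriv_deriv_neg {f : ℝ → ℝ} {a : ℝ}
    (hf : ∀ x > a, DifferentiableAt ℝ f x) (hf'' : ∀ x > a, deriv (deriv f) x < 0) :
    ¬ ConvexOn ℝ (Ioi a) f := by
  refine not_convexOn_of_strictConcaveOn (Ioi_infinite a).nontrivial
    (strictConcaveOn_of_deriv2_neg (convex_Ioi a)
      (fun x hx => (hf x hx).continuousAt.continuousWithinAt) fun x hx => ?_)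
  rw [interior_Ioi] at hx
  exact hf'' x hx

theorem eventually_hasDerivAt_deriv_atTop {f f' f'' : ℝ → ℝ}
    (hf : ∀ᶠ x in atTop, HasDerivAt f (f' x) x) (hf' : ∀ᶠ x in atTop, HasDerivAt f' (f'' x) x) :
    ∀ᶠ x in atTop, HasDerivAt (deriv f) (f'' x) x := by
  obtain ⟨a, ha⟩ := eventually_atTop.1 hf
  filter_upwards [hf', eventually_gt_atTop a] with x hx hax
  refine hx.congr_of_eventuallyEq ?_
  filter_upwards [lt_mem_nhds hax] with y hay
  exact (ha y hay.le).deriv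

variable {ρ ρ' ρ'' g g' g'' : ℝ → ℝ} {p q : ℝ}

theorem eventually_comp_secondDeriv_neg
    (hρ'_pos : ∀ᶠ t in atTop, 0 < ρ' t) (hg'_ne : ∀ᶠ s in atTop, g' s ≠ 0)
    (hg_top : Tendsto g atTop atTop)
    (hp : Tendsto (fun t => t * ρ'' t / ρ' t) atTop (𝓝 p))
    (hq : Tendsto (fun s => g s * g'' s / g' s ^ 2) atTop (𝓝 q)) (hpq : p + q < 0) :
    ∀ᶠ s in atTop, ρ'' (g s) * g' s ^ 2 + ρ' (g s) * g'' s < 0 := by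
  filter_upwards [((hp.comp hg_top).add hq).eventually_lt_const hpq, hg_top.eventually hρ'_pos,
    hg'_ne, hg_top.eventually_gt_atTop 0] with s hneg hρ' hg' hg
  have hfactor : ρ'' (g s) * g' s ^ 2 + ρ' (g s) * g'' s =
      (g s * ρ'' (g s) / ρ' (g s) + g s * g'' s / g' s ^ 2) * (ρ' (g s) * g' s ^ 2 / g s) := by
    field_simp
  rw [hfactor]
  exact mul_neg_of_neg_of_pos hneg (by positivity)

theorem eventually_deriv_deriv_comp_neg
    (hρ : ∀ᶠ t in atTop, HasDerivAt ρ (ρ' t) t) (hρ' : ∀ᶠ t in atTop, HasDerivAt ρ' (ρ'' t) t)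
    (hg : ∀ᶠ s in atTop, HasDerivAt g (g' s) s) (hg' : ∀ᶠ s in atTop, HasDerivAt g' (g'' s) s)
    (hρ'_pos : ∀ᶠ t in atTop, 0 < ρ' t) (hg'_ne : ∀ᶠ s in atTop, g' s ≠ 0)
    (hg_top : Tendsto g atTop atTop)
    (hp : Tendsto (fun t => t * ρ'' t / ρ' t) atTop (𝓝 p))
    (hq : Tendsto (fun s => g s * g'' s / g' s ^ 2) atTop (𝓝 q)) (hpq : p + q < 0) :
    ∀ᶠ s in atTop, DifferentiableAt ℝ (ρ ∘ g) s ∧ DifferentiableAt ℝ (deriv (ρ ∘ g)) s ∧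
      deriv (deriv (ρ ∘ g)) s < 0 := by
  have hfirst : ∀ᶠ s in atTop, HasDerivAt (ρ ∘ g) (ρ' (g s) * g' s) s := by
    filter_upwards [hg_top.eventually hρ, hg] with s hρs hgs
    exact hρs.comp s hgs
  have hsecond : ∀ᶠ s in atTop, HasDerivAt (fun s => ρ' (g s) * g' s)
      (ρ'' (g s) * g' s ^ 2 + ρ' (g s) * g'' s) s := by
    filter_upwards [hg_top.eventually hρ', hg, hg'] with s hρs hgs hgs'
    exact ((hρs.comp s hgs).mul hgs').congr_deriv (by simp only [Function.comp_apply]; ring)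
  filter_upwards [hfirst, eventually_hasDerivAt_deriv_atTop hfirst hsecond,
    eventually_comp_secondDeriv_neg hρ'_pos hg'_ne hg_top hp hq hpq] with s h₁ h₂ hneg
  exact ⟨h₁.differentiableAt, h₂.differentiableAt, h₂.deriv.trans_lt hneg⟩

end SecondDerivative

section StandardizedResidual

variable (b v : ℝ)

theorem tendsto_add_const_div_add_const_atTop (x y : ℝ) :
    Tendsto (fun s : ℝ => (s + x) / (s + y)) atTop (𝓝 1) := by
  have hlim : Tendsto (fun s : ℝ => 1 + (x - y) / (s + y)) atTop (𝓝 (1 + 0)) :=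
    ((tendsto_atTop_add_const_right _ y tendsto_id).const_div_atTop (x - y)).const_add 1
  rw [add_zero] at hlim
  refine hlim.congr' ?_
  filter_upwards [eventually_gt_atTop (-y)] with s hs
  have : s + y ≠ 0 := by linarith
  field_simp
  ring

theorem tendsto_standardizedResidual_atTop :
    Tendsto (standardizedResidual b v) atTop atTop := by
  have hsqrt : Tendsto (fun s => √(s + v)) atTop atTop :=
    Real.tendsto_sqrt_atTop.comp (tendsto_atTop_add_const_right _ v tendsto_id)
  have hratio := tendsto_add_const_div_add_const_atTop (-b) v
  refine (hsqrt.atTop_mul_pos one_pos hratio).congr fun s => ?_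
  rw [standardizedResidual, mul_div_left_comm, Real.sqrt_div_self', mul_one_div, ← sub_eq_add_neg]

variable {b v} {s : ℝ}

theorem hasDerivAt_sqrt_add_const (hs : 0 < s + v) :
    HasDerivAt (fun s => √(s + v)) (1 / (2 * √(s + v))) s :=
  ((hasDerivAt_id s).add_const v).sqrt hs.ne'

theorem hasDerivAt_standardizedResidual (hs : 0 < s + v) :
    HasDerivAt (standardizedResidual b v) ((s + b + 2 * v) / (2 * √(s + v) ^ 3)) s := by
  have hr : 0 < √(s + v) := Real.sqrt_pos.2 hs
  refine (((hasDerivAt_id s).sub_const b).div (hasDerivAt_sqrt_add_const hs) hr.ne').congr_deriv ?_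
  simp only [id]
  field_simp
  rw [Real.sq_sqrt hs.le]
  ring

theorem hasDerivAt_deriv_standardizedResidual (hs : 0 < s + v) :
    HasDerivAt (fun s => (s + b + 2 * v) / (2 * √(s + v) ^ 3))
      (-(s + 3 * b + 4 * v) / (4 * √(s + v) ^ 5)) s := by
  have hnum : HasDerivAt (fun s => s + b + 2 * v) 1 s :=
    ((hasDerivAt_id s).add_const b).add_const (2 * v)
  have hden := ((hasDerivAt_sqrt_add_const hs).fun_pow 3).const_mul 2
  have hsq : √(s + v) ^ 2 = s + v := Real.sq_sqrt hs.le
  refine (hnum.div hden (by positivity)).congr_deriv ?_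
  field_simp
  linear_combination 8 * √(s + v) ^ 2 * hsq

theorem tendsto_standardizedResidual_mul_secondDeriv_div_sq (b v : ℝ) :
    Tendsto (fun s => standardizedResidual b v s * (-(s + 3 * b + 4 * v) / (4 * √(s + v) ^ 5)) /
      ((s + b + 2 * v) / (2 * √(s + v) ^ 3)) ^ 2) atTop (𝓝 (-1)) := by
  have hlim : Tendsto (fun s => -((s + -b) / (s + (b + 2 * v)) *
      ((s + (3 * b + 4 * v)) / (s + (b + 2 * v))))) atTop (𝓝 (-(1 * 1))) :=
    ((tendsto_add_const_div_add_const_atTop _ _).mul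
      (tendsto_add_const_div_add_const_atTop _ _)).neg
  rw [one_mul] at hlim
  refine hlim.congr' ?_
  filter_upwards [eventually_gt_atTop (-v), eventually_gt_atTop (-(b + 2 * v))] with s hv hd
  have hr : 0 < √(s + v) := Real.sqrt_pos.2 (by linarith)
  have hd' : s + b + 2 * v ≠ 0 := by linarith
  have hd'' : s + (b + 2 * v) ≠ 0 := by linarith
  rw [standardizedResidual]
  field_simp
  ring

end StandardizedResidual

theorem eventually_deriv_deriv_robustFidelity_neg {ρ ρ' ρ'' : ℝ → ℝ} {p : ℝ}
    (hρ : ∀ᶠ t in atTop, HasDerivAt ρ (ρ' t) t) (hρ' : ∀ᶠ t in atTop, HasDerivAt ρ' (ρ'' t) t)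
    (hρ'_pos : ∀ᶠ t in atTop, 0 < ρ' t)
    (hp : Tendsto (fun t => t * ρ'' t / ρ' t) atTop (𝓝 p)) (hp_lt : p < 1) (b v : ℝ) :
    ∀ᶠ s in atTop, DifferentiableAt ℝ (robustFidelity ρ b v) s ∧
      DifferentiableAt ℝ (deriv (robustFidelity ρ b v)) s ∧
      deriv (deriv (robustFidelity ρ b v)) s < 0 := by
  have hpos : ∀ᶠ s in atTop, 0 < s + v :=
    (tendsto_atTop_add_const_right _ v tendsto_id).eventually_gt_atTop 0
  have hderiv_ne : ∀ᶠ s in atTop, (s + b + 2 * v) / (2 * √(s + v) ^ 3) ≠ 0 := by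
    filter_upwards [hpos, eventually_gt_atTop (-(b + 2 * v))] with s hs hd
    have hnum : 0 < s + b + 2 * v := by linarith
    positivity
  exact eventually_deriv_deriv_comp_neg hρ hρ'
    (hpos.mono fun _ => hasDerivAt_standardizedResidual)
    (hpos.mono fun _ => hasDerivAt_deriv_standardizedResidual) hρ'_pos hderiv_ne
    (tendsto_standardizedResidual_atTop b v) hp
    (tendsto_standardizedResidual_mul_secondDeriv_div_sq b v) (by linarith)

section FairLoss

variable {β t : ℝ}

theorem hasDerivAt_fairLoss (hβ : 0 < β) (ht : 0 < t) :
    HasDerivAt (fairLoss β) (β * t / (β + t)) t := by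
  have habs : HasDerivAt (fun t => |t| / β) (1 / β) t := (hasDerivAt_abs_pos ht).div_const β
  have hlog := (habs.const_add 1).log (by positivity)
  refine ((habs.sub hlog).const_mul (β ^ 2)).congr_deriv ?_
  rw [abs_of_pos ht]
  field_simp
  ring

theorem hasDerivAt_deriv_fairLoss (h : β + t ≠ 0) :
    HasDerivAt (fun t => β * t / (β + t)) (β ^ 2 / (β + t) ^ 2) t := by
  refine (((hasDerivAt_id t).const_mul β).div ((hasDerivAt_id t).const_add β) h).congr_deriv ?_
  simp only [id]
  ring

theorem tendsto_mul_secondDeriv_div_deriv_fairLoss (hβ : β ≠ 0) :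
    Tendsto (fun t => t * (β ^ 2 / (β + t) ^ 2) / (β * t / (β + t))) atTop (𝓝 0) := by
  have hlim : Tendsto (fun t => β / (β + t)) atTop (𝓝 0) :=
    (tendsto_atTop_add_const_left _ β tendsto_id).const_div_atTop β
  refine hlim.congr' ?_
  filter_upwards [eventually_gt_atTop 0, eventually_gt_atTop (-β)] with t ht hβt
  have hsum : β + t ≠ 0 := by linarith
  field_simp

theorem eventually_deriv_deriv_robustFidelity_fairLoss_neg (hβ : 0 < β) (b v : ℝ) :
    ∀ᶠ s in atTop, DifferentiableAt ℝ (robustFidelity (fairLoss β) b v) s ∧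
      DifferentiableAt ℝ (deriv (robustFidelity (fairLoss β) b v)) s ∧
      deriv (deriv (robustFidelity (fairLoss β) b v)) s < 0 := by
  have hpos : ∀ᶠ t : ℝ in atTop, 0 < t := eventually_gt_atTop 0
  exact eventually_deriv_deriv_robustFidelity_neg
    (hpos.mono fun t ht => hasDerivAt_fairLoss hβ ht)
    (hpos.mono fun t ht => hasDerivAt_deriv_fairLoss (by positivity))
    (hpos.mono fun t ht => by positivity)
    (tendsto_mul_secondDeriv_div_deriv_fairLoss hβ.ne') one_pos b v

end FairLoss

theorem fair_fidelity_eventually_nonconvex_general {β : ℝ} (hβ : 0 < β) (b v : ℝ) :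
    ∃ S : ℝ,
      (∀ s > S, DifferentiableAt ℝ (deriv (robustFidelity (fairLoss β) b v)) s ∧
        deriv (deriv (robustFidelity (fairLoss β) b v)) s < 0) ∧
      ∀ S' ≥ S, ¬ ConvexOn ℝ (Ioi S') (robustFidelity (fairLoss β) b v) := by
  obtain ⟨S, hS⟩ := eventually_atTop.1 (eventually_deriv_deriv_robustFidelity_fairLoss_neg hβ b v)
  refine ⟨S, fun s hs => (hS s hs.le).2, fun S' hS' => ?_⟩
  have hS'_gt : ∀ s > S', s ≥ S := fun s hs => hS'.trans hs.le
  exact not_convexOn_Ioi_of_deriv_deriv_neg (fun s hs => (hS s (hS'_gt s hs)).1)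
    fun s hs => (hS s (hS'_gt s hs)).2.2

/-- The Fair loss ρ(t) = β²(|t|/β − log(1 + |t|/β)) yields a robust scalar fidelity
ψ(s) = ρ((s − b)/√(s + σ²)) whose second derivative is negative for all sufficiently large
s; in particular ψ is not convex on any interval of the form (S, ∞). -/
theorem fair_fidelity_eventually_nonconvex
    (β : ℝ) (hβ : 0 < β) (b σ : ℝ) (hb : 0 ≤ b) :
    ∃ S : ℝ,
      (∀ s > S,
        DifferentiableAt ℝ
          (deriv (fun s : ℝ =>
            β ^ 2 * (|( (s - b) / Real.sqrt (s + σ ^ 2))| / β -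
              Real.log (1 + |(s - b) / Real.sqrt (s + σ ^ 2)| / β)))) s ∧
        deriv (deriv (fun s : ℝ =>
            β ^ 2 * (|(s - b) / Real.sqrt (s + σ ^ 2)| / β -
              Real.log (1 + |(s - b) / Real.sqrt (s + σ ^ 2)| / β)))) s < 0) ∧
      (∀ S' ≥ S, ¬ ConvexOn ℝ (Set.Ioi S')
        (fun s : ℝ =>
          β ^ 2 * (|(s - b) / Real.sqrt (s + σ ^ 2)| / β -
            Real.log (1 + |(s - b) / Real.sqrt (s + σ ^ 2)| / β)))) :=
  fair_fidelity_eventually_nonconvex_general hβ b (σ ^ 2)
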